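/- (Lemma 3) Let S be a mostly symmetric step set with S(z) = z_d^{-1} A(ẑ) + Q(ẑ) + z_d B(ẑ) and zero drift A(1) = B(1). (i) The polynomial H_3(z,t) = 1 - t z_1···z_d (Q(ẑ) + z_d A(ẑ)) is nonzero whenever |z_j| ≤ 1 for all 1 ≤ j ≤ d and |t| ≤ 1/S(1). (ii) There exist δ_0, ε_0 > 0 such that for all 0 < δ < δ_0 and 0 < ε < ε_0 and every w ∈ Γ, B(ẑ) ≠ 0 for all z ∈ N_w. -/

import Mathlib

open Finset Filter MeasureTheory
open scoped Classical Real

noncomputable section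

/-- Total weight of walks of length `n` with steps in `S` (weighted by `w`),
starting at the origin and never leaving `ℕ^d`. -/
def walkWeight (d : ℕ) (S : Finset (Fin d → ℤ)) (w : (Fin d → ℤ) → ℝ) (n : ℕ) : ℝ :=
  ∑ f : Fin n → {i // i ∈ S},
    if ∀ m : ℕ, m ≤ n → ∀ j : Fin d,
        0 ≤ ∑ k ∈ Finset.univ.filter (fun k : Fin n => (k : ℕ) < m), ((f k : Fin d → ℤ) j)
    then ∏ k : Fin n, w (f k) else 0

/-- The step set `S` (with weights `w`) is symmetric over the `k`-th coordinate axis. -/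
def SymmetricAxis (d : ℕ) (S : Finset (Fin d → ℤ)) (w : (Fin d → ℤ) → ℝ) (k : Fin d) : Prop :=
  ∀ i ∈ S, Function.update i k (-(i k)) ∈ S ∧ w (Function.update i k (-(i k))) = w i

namespace ZeroDrift

variable (d : ℕ) (S : Finset (Fin (d + 1) → ℤ)) (w : (Fin (d + 1) → ℤ) → ℝ)

/-- `S(1)`, the total weight of the step set. -/
def S1 : ℝ := ∑ i ∈ S, w i

/-- `A(ẑ)`: the Laurent polynomial collecting steps with last coordinate `-1`. -/
def AC (z : Fin (d + 1) → ℂ) : ℂ :=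
  ∑ i ∈ S.filter fun i => i (Fin.last d) = -1,
    (w i : ℂ) * ∏ j : Fin d, z (Fin.castSucc j) ^ (i (Fin.castSucc j))

/-- `B(ẑ)`: the Laurent polynomial collecting steps with last coordinate `1`. -/
def BC (z : Fin (d + 1) → ℂ) : ℂ :=
  ∑ i ∈ S.filter fun i => i (Fin.last d) = 1,
    (w i : ℂ) * ∏ j : Fin d, z (Fin.castSucc j) ^ (i (Fin.castSucc j))

/-- `Q(ẑ)`: the Laurent polynomial collecting steps with last coordinate `0`. -/
def QC (z : Fin (d + 1) → ℂ) : ℂ :=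
  ∑ i ∈ S.filter fun i => i (Fin.last d) = 0,
    (w i : ℂ) * ∏ j : Fin d, z (Fin.castSucc j) ^ (i (Fin.castSucc j))

/-- The characteristic Laurent polynomial `S(z)` evaluated at `z : ℂ^{d+1}`. -/
def SC (z : Fin (d + 1) → ℂ) : ℂ :=
  ∑ i ∈ S, (w i : ℂ) * ∏ j : Fin (d + 1), z j ^ (i j)

/-- `S̄(z) = S(z_1,…,z_{d},1/z_{d+1})` evaluated at `z : ℂ^{d+1}`. -/
def SbarC (z : Fin (d + 1) → ℂ) : ℂ :=
  ∑ i ∈ S, (w i : ℂ) *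
    (∏ j : Fin d, z (Fin.castSucc j) ^ (i (Fin.castSucc j))) *
    z (Fin.last d) ^ (-(i (Fin.last d)))

/-- The numerator `G(z,t)` of the diagonal representation. -/
def GC (z : Fin (d + 1) → ℂ) (t : ℂ) : ℂ :=
  (∏ j : Fin d, (1 + z (Fin.castSucc j))) *
    (1 - t * (∏ j, z j) * (QC d S w z + 2 * z (Fin.last d) * AC d S w z))

/-- The denominator `H(z,t) = H_1 H_2 H_3` of the diagonal representation. -/
def HC (z : Fin (d + 1) → ℂ) (t : ℂ) : ℂ :=
  (1 - z (Fin.last d)) * (1 - t * (∏ j, z j) * SbarC d S w z) *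
    (1 - t * (∏ j, z j) * (QC d S w z + z (Fin.last d) * AC d S w z))

/-- The point of `ℂ^{d+1}` with coordinates `i^{m_j}` encoded by `m : Fin (d+1) → Fin 4`. -/
def wOf (m : Fin (d + 1) → Fin 4) : Fin (d + 1) → ℂ :=
  fun j => Complex.I ^ (m j : ℕ)

/-- The (indices of the) finite set `Γ` of possible contributing points: `w_j ∈ {±1}` for
`j ≤ d`, `w_{d+1} ∈ {±1,±i}`, and `|1/(w_1⋯w_{d+1} S(w))| = 1/S(1)`. -/
def GammaIdx : Finset (Fin (d + 1) → Fin 4) :=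
  Finset.univ.filter fun m =>
    (∀ j : Fin d, m (Fin.castSucc j) = 0 ∨ m (Fin.castSucc j) = 2) ∧
    ‖1 / ((∏ j, wOf d m j) * SC d S w (wOf d m))‖ = 1 / S1 d S w

/-- The argument (angle) of the point encoded by `m` in coordinate `j`. -/
def argOf (m : Fin (d + 1) → Fin 4) (j : Fin (d + 1)) : ℝ := (m j : ℕ) * π / 2

/-- The box of angles parametrizing the product of arcs `N_w` for `w = wOf m`. -/
def box (m : Fin (d + 1) → Fin 4) (δ : ℝ) : Set (Fin (d + 1) → ℝ) :=
  Set.univ.pi fun j => Set.Ioo (argOf d m j - δ) (argOf d m j + δ)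

/-- The parametrization of the torus `|z_j| = 1` (`j ≤ d`), `|z_{d+1}| = 1 - ε`. -/
def zOf (ε : ℝ) (θ : Fin (d + 1) → ℝ) : Fin (d + 1) → ℂ :=
  fun j => (if j = Fin.last d then (1 - ε : ℂ) else 1) * Complex.exp (Complex.I * θ j)

/-- Angles parametrizing `N = ⋃_{w ∈ Γ} N_w`. -/
def Nparam (δ : ℝ) : Set (Fin (d + 1) → ℝ) := ⋃ m ∈ GammaIdx d S w, box d m δ

/-- The contour integral `(2πi)^{-(d+2)} ∫_{N × C} G/H · dz dt/(z_1⋯z_{d+1}t)^{n+1}`,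
parametrized by angles, where `C` is the circle `|t| = r`. -/
def fullIntegral (n : ℕ) (ε δ r : ℝ) : ℂ :=
  (((2 * π) ^ (d + 2) : ℝ))⁻¹ •
    ∫ θ in Nparam d S w δ,
      ∫ φ in Set.Ioo 0 (2 * π),
        GC d S w (zOf d ε θ) ((r : ℂ) * Complex.exp (Complex.I * φ)) /
            HC d S w (zOf d ε θ) ((r : ℂ) * Complex.exp (Complex.I * φ)) *
          (((∏ j, zOf d ε θ j) * ((r : ℂ) * Complex.exp (Complex.I * φ))) ^ n)⁻¹

/-- The residue integrand
`[(1+z_1)⋯(1+z_d)/(B(ẑ) z_1⋯z_{d+1})]·[(B(ẑ) - z_{d+1}^2 A(ẑ))/(1-z_{d+1})]·S̄(z)^n`,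
parametrized by angles, including the Jacobian factors `i z_j` of `dz_j`. -/
def resIntegrand (n : ℕ) (ε : ℝ) (θ : Fin (d + 1) → ℝ) : ℂ :=
  ((∏ j : Fin d, (1 + zOf d ε θ (Fin.castSucc j))) /
      (BC d S w (zOf d ε θ) * ∏ j, zOf d ε θ j)) *
    ((BC d S w (zOf d ε θ) - zOf d ε θ (Fin.last d) ^ 2 * AC d S w (zOf d ε θ)) /
      (1 - zOf d ε θ (Fin.last d))) *
    SbarC d S w (zOf d ε θ) ^ n *
    ∏ j, Complex.I * zOf d ε θ j

/-- The contour integral `∫_{N_w} (residue integrand) dz` over the product of arcs `N_w`,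
`w = wOf m`, parametrized by angles. -/
def resIntegral (n : ℕ) (ε δ : ℝ) (m : Fin (d + 1) → Fin 4) : ℂ :=
  ∫ θ in box d m δ, resIntegrand d S w n ε θ

end ZeroDrift


namespace ZeroDrift

variable {d : ℕ} {S : Finset (Fin (d + 1) → ℤ)} {w : (Fin (d + 1) → ℤ) → ℝ}

lemma norm_sum_weighted_le {ι : Type*} {T : Finset ι} {v : ι → ℝ} {f : ι → ℂ}
    (hv : ∀ i ∈ T, 0 < v i) (hf : ∀ i ∈ T, ‖f i‖ ≤ 1) :
    ‖∑ i ∈ T, (v i : ℂ) * f i‖ ≤ ∑ i ∈ T, v i := by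
  refine norm_sum_le_of_le _ fun i hi => ?_
  rw [norm_mul, Complex.norm_real, Real.norm_of_nonneg (hv i hi).le]
  exact mul_le_of_le_one_right (hv i hi).le (hf i hi)

lemma norm_mul_zpow_le_one {z : ℂ} (hz : ‖z‖ ≤ 1) {n : ℤ} (hn : n = -1 ∨ n = 0 ∨ n = 1) :
    ‖z * z ^ n‖ ≤ 1 := by
  rcases hn with rfl | rfl | rfl
  · rcases eq_or_ne z 0 with rfl | h
    · simp
    · simp [mul_inv_cancel₀ h]
  · simpa using hz
  · rw [zpow_one, norm_mul]
    exact mul_le_one₀ hz (norm_nonneg _) hz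

lemma norm_prod_mul_prod_zpow_le_one {z : Fin (d + 1) → ℂ} (hz : ∀ j, ‖z j‖ ≤ 1)
    {i : Fin (d + 1) → ℤ} (hi : ∀ j, i j = -1 ∨ i j = 0 ∨ i j = 1) :
    ‖(∏ j, z j) * ∏ j : Fin d, z (Fin.castSucc j) ^ i (Fin.castSucc j)‖ ≤ 1 := by
  rw [Fin.prod_univ_castSucc, mul_right_comm, ← Finset.prod_mul_distrib, norm_mul, norm_prod]
  refine mul_le_one₀ (Finset.prod_le_one (fun _ _ => norm_nonneg _) fun j _ => ?_)
    (norm_nonneg _) (hz _)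
  exact norm_mul_zpow_le_one (hz _) (hi _)

lemma S1_pos (hw : ∀ i ∈ S, 0 < w i) (hS : S.Nonempty) : 0 < S1 d S w :=
  Finset.sum_pos hw hS

lemma sum_last_ne_one_lt_S1 (hw : ∀ i ∈ S, 0 < w i) (hfwd : ∃ i ∈ S, i (Fin.last d) = 1) :
    ∑ i ∈ S with ¬ i (Fin.last d) = 1, w i < S1 d S w := by
  obtain ⟨i, hi, h1⟩ := hfwd
  have hpos : 0 < ∑ i ∈ S with i (Fin.last d) = 1, w i :=
    Finset.sum_pos (fun k hk => hw k (Finset.mem_filter.1 hk).1)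
      ⟨i, Finset.mem_filter.2 ⟨hi, h1⟩⟩
  have := Finset.sum_filter_add_sum_filter_not S (fun i => i (Fin.last d) = 1) w
  rw [S1]
  linarith

lemma sum_last_zero_add_sum_last_neg_one_le (hw : ∀ i ∈ S, 0 < w i) :
    ∑ i ∈ S with i (Fin.last d) = 0, w i + ∑ i ∈ S with i (Fin.last d) = -1, w i ≤
      ∑ i ∈ S with ¬ i (Fin.last d) = 1, w i := by
  rw [← Finset.sum_union (Finset.disjoint_filter.2 fun i _ h => by omega)]
  refine Finset.sum_le_sum_of_subset_of_nonneg (fun i hi => ?_)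
    fun i hi _ => (hw i (Finset.mem_filter.1 hi).1).le
  simp only [Finset.mem_union, Finset.mem_filter] at hi ⊢
  rcases hi with h | h <;> exact ⟨h.1, by omega⟩

/-- The product `z_1⋯z_{d+1}` clears the denominators of a Laurent polynomial with steps in
`{-1,0,1}`, so the result is bounded on the closed polydisc by the total weight. -/
lemma norm_prod_mul_laurent_le {T : Finset (Fin (d + 1) → ℤ)} (hw : ∀ i ∈ T, 0 < w i)
    (hT : ∀ i ∈ T, ∀ j, i j = -1 ∨ i j = 0 ∨ i j = 1)
    {z : Fin (d + 1) → ℂ} (hz : ∀ j, ‖z j‖ ≤ 1) :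
    ‖(∏ j, z j) * ∑ i ∈ T,
      (w i : ℂ) * ∏ j : Fin d, z (Fin.castSucc j) ^ i (Fin.castSucc j)‖ ≤ ∑ i ∈ T, w i := by
  simp_rw [Finset.mul_sum, mul_left_comm]
  exact norm_sum_weighted_le hw fun i hi => norm_prod_mul_prod_zpow_le_one hz (hT i hi)

theorem H3_ne_zero (hstep : ∀ i ∈ S, ∀ j, i j = -1 ∨ i j = 0 ∨ i j = 1)
    (hw : ∀ i ∈ S, 0 < w i) (hfwd : ∃ i ∈ S, i (Fin.last d) = 1)
    {z : Fin (d + 1) → ℂ} {t : ℂ} (hz : ∀ j, ‖z j‖ ≤ 1) (ht : ‖t‖ ≤ 1 / S1 d S w) :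
    1 - t * (∏ j, z j) * (QC d S w z + z (Fin.last d) * AC d S w z) ≠ 0 := by
  have hpos : 0 < S1 d S w := S1_pos hw (hfwd.imp fun _ h => h.1)
  have hQ : ‖(∏ j, z j) * QC d S w z‖ ≤ ∑ i ∈ S with i (Fin.last d) = 0, w i :=
    norm_prod_mul_laurent_le (fun i hi => hw i (Finset.mem_filter.1 hi).1)
      (fun i hi => hstep i (Finset.mem_filter.1 hi).1) hz
  have hA : ‖(∏ j, z j) * AC d S w z‖ ≤ ∑ i ∈ S with i (Fin.last d) = -1, w i :=
    norm_prod_mul_laurent_le (fun i hi => hw i (Finset.mem_filter.1 hi).1)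
      (fun i hi => hstep i (Finset.mem_filter.1 hi).1) hz
  have hzA : ‖z (Fin.last d) * ((∏ j, z j) * AC d S w z)‖ ≤
      ∑ i ∈ S with i (Fin.last d) = -1, w i := by
    rw [norm_mul]
    exact (mul_le_of_le_one_left (norm_nonneg _) (hz _)).trans hA
  have hlt : ‖(∏ j, z j) * QC d S w z + z (Fin.last d) * ((∏ j, z j) * AC d S w z)‖ <
      S1 d S w :=
    calc _ ≤ _ := (norm_add_le _ _).trans (add_le_add hQ hzA)
      _ ≤ _ := sum_last_zero_add_sum_last_neg_one_le hw
      _ < _ := sum_last_ne_one_lt_S1 hw hfwd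
  intro h
  have h1 : t * ((∏ j, z j) * QC d S w z + z (Fin.last d) * ((∏ j, z j) * AC d S w z)) = 1 := by
    linear_combination -h
  have h2 := congrArg norm h1
  rw [norm_mul, norm_one] at h2
  have h3 := mul_le_mul_of_nonneg_right ht (norm_nonneg
    ((∏ j, z j) * QC d S w z + z (Fin.last d) * ((∏ j, z j) * AC d S w z)))
  rw [h2, one_div_mul_eq_div, one_le_div hpos] at h3
  linarith

lemma norm_SC_le_of_norm_eq_one (hw : ∀ i ∈ S, 0 < w i) {z : Fin (d + 1) → ℂ}
    (hz : ∀ j, ‖z j‖ = 1) :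
    ‖SC d S w z‖ ≤ ‖BC d S w z‖ + ∑ i ∈ S with ¬ i (Fin.last d) = 1, w i := by
  have hB : ∑ i ∈ S with i (Fin.last d) = 1, (w i : ℂ) * ∏ j : Fin (d + 1), z j ^ i j =
      BC d S w z * z (Fin.last d) := by
    rw [BC, Finset.sum_mul]
    refine Finset.sum_congr rfl fun i hi => ?_
    rw [Fin.prod_univ_castSucc, (Finset.mem_filter.1 hi).2, zpow_one, mul_assoc]
  rw [SC, ← Finset.sum_filter_add_sum_filter_not S (fun i => i (Fin.last d) = 1), hB]
  refine (norm_add_le _ _).trans (add_le_add ?_ ?_)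
  · rw [norm_mul, hz, mul_one]
  · exact norm_sum_weighted_le (fun i hi => hw i (Finset.mem_filter.1 hi).1)
      fun i _ => by simp [norm_prod, norm_zpow, hz]

lemma norm_wOf (m : Fin (d + 1) → Fin 4) (j : Fin (d + 1)) : ‖wOf d m j‖ = 1 := by
  simp [wOf]

lemma zOf_zero_argOf (m : Fin (d + 1) → Fin 4) : zOf d 0 (argOf d m) = wOf d m := by
  funext j
  have h : Complex.I * (argOf d m j : ℂ) = (m j : ℕ) * (π / 2 * Complex.I) := by
    simp only [argOf]
    push_cast
    ring
  simp only [zOf, wOf, h, Complex.exp_nat_mul, Complex.exp_pi_div_two_mul_I]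
  simp

lemma BC_wOf_ne_zero (hw : ∀ i ∈ S, 0 < w i) (hfwd : ∃ i ∈ S, i (Fin.last d) = 1)
    {m : Fin (d + 1) → Fin 4} (hm : m ∈ GammaIdx d S w) : BC d S w (wOf d m) ≠ 0 := by
  have hS : ‖SC d S w (wOf d m)‖ = S1 d S w := by
    simpa [norm_prod, norm_wOf] using (Finset.mem_filter.1 hm).2.2
  have h := norm_SC_le_of_norm_eq_one hw (norm_wOf m)
  intro h0
  rw [h0, norm_zero, zero_add, hS] at h
  exact h.not_gt (sum_last_ne_one_lt_S1 hw hfwd)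

lemma BC_zOf (ε : ℝ) (θ : Fin (d + 1) → ℝ) :
    BC d S w (zOf d ε θ) = BC d S w (zOf d 0 θ) := by
  simp [BC, zOf]

lemma continuous_BC_zOf : Continuous fun θ => BC d S w (zOf d 0 θ) := by
  unfold BC
  refine continuous_finsetSum _ fun i _ => continuous_const.mul
    (continuous_finsetProd _ fun j _ => ?_)
  refine Continuous.zpow₀ ?_ _ fun θ => Or.inl (by simp [zOf, Complex.exp_ne_zero])
  unfold zOf
  fun_prop

lemma box_subset_ball (m : Fin (d + 1) → Fin 4) {δ : ℝ} (hδ : 0 < δ) :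
    box d m δ ⊆ Metric.ball (argOf d m) δ := by
  intro θ hθ
  rw [Metric.mem_ball, dist_pi_lt_iff hδ]
  intro j
  have := hθ j (Set.mem_univ j)
  rw [Real.dist_eq, abs_lt]
  exact ⟨by linarith [this.1], by linarith [this.2]⟩

theorem eventually_BC_ne_zero (hw : ∀ i ∈ S, 0 < w i)
    (hfwd : ∃ i ∈ S, i (Fin.last d) = 1) :
    ∀ᶠ δ in nhdsWithin (0 : ℝ) (Set.Ioi 0), ∀ m ∈ GammaIdx d S w, ∀ θ ∈ box d m δ, ∀ ε : ℝ,
      BC d S w (zOf d ε θ) ≠ 0 := by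
  rw [Filter.eventually_all_finset]
  intro m hm
  have hne : BC d S w (zOf d 0 (argOf d m)) ≠ 0 := by
    rw [zOf_zero_argOf]
    exact BC_wOf_ne_zero hw hfwd hm
  obtain ⟨r, hr, hball⟩ := Metric.eventually_nhds_iff_ball.1
    (continuous_BC_zOf.continuousAt.eventually_ne hne)
  filter_upwards [Ioo_mem_nhdsGT hr] with δ hδ θ hθ ε
  rw [BC_zOf]
  exact hball θ (Metric.ball_subset_ball hδ.2.le (box_subset_ball m hδ.1 hθ))

end ZeroDrift

/-- Lemma: (i) the factor `H_3(z,t) = 1 - t z_1⋯z_{d+1}(Q(ẑ) + z_{d+1} A(ẑ))` does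
not vanish for `|z_j| ≤ 1` and `|t| ≤ 1/S(1)`; (ii) for sufficiently small `δ, ε`,
`B(ẑ) ≠ 0` on each `N_w`, `w ∈ Γ`. -/
theorem H3_nonvanishing_and_B_nonvanishing
    (d : ℕ) (S : Finset (Fin (d + 1) → ℤ)) (w : (Fin (d + 1) → ℤ) → ℝ)
    (hstep : ∀ i ∈ S, (∀ j, i j = -1 ∨ i j = 0 ∨ i j = 1) ∧ i ≠ 0)
    (hw : ∀ i ∈ S, 0 < w i)
    (hsym : ∀ k : Fin d, SymmetricAxis (d + 1) S w (Fin.castSucc k))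
    (hfwd : ∀ k : Fin (d + 1), ∃ i ∈ S, i k = 1)
    (hbwd : ∀ k : Fin (d + 1), ∃ i ∈ S, i k = -1)
    (hzero : (∑ i ∈ S.filter fun i => i (Fin.last d) = -1, w i)
        = ∑ i ∈ S.filter fun i => i (Fin.last d) = 1, w i)
    :
    (∀ (z : Fin (d + 1) → ℂ) (t : ℂ),
        (∀ j, ‖z j‖ ≤ 1) → ‖t‖ ≤ 1 / ZeroDrift.S1 d S w →
        1 - t * (∏ j, z j) *
            (ZeroDrift.QC d S w z + z (Fin.last d) * ZeroDrift.AC d S w z) ≠ 0) ∧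
    (∃ δ₀ ε₀ : ℝ, 0 < δ₀ ∧ 0 < ε₀ ∧
      ∀ δ ε : ℝ, 0 < δ → δ < δ₀ → 0 < ε → ε < ε₀ →
        ∀ m ∈ ZeroDrift.GammaIdx d S w, ∀ θ ∈ ZeroDrift.box d m δ,
          ZeroDrift.BC d S w (ZeroDrift.zOf d ε θ) ≠ 0) := by
  have hlast := hfwd (Fin.last d)
  refine ⟨fun z t hz ht =>
    ZeroDrift.H3_ne_zero (fun i hi => (hstep i hi).1) hw hlast hz ht, ?_⟩
  obtain ⟨δ₀, hδ₀, h⟩ := mem_nhdsGT_iff_exists_Ioo_subset.1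
    (ZeroDrift.eventually_BC_ne_zero hw hlast)
  exact ⟨δ₀, 1, hδ₀, one_pos, fun δ ε hδ hδ' _ _ m hm θ hθ => h ⟨hδ, hδ'⟩ m hm θ hθ ε⟩

end
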